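/- For all d > 0 and β > 0 there exist ε > 0 and integers p and m₀ such that for all m > m₀ the following holds. Suppose (V₁, V₂, V₃) is an (ε,d)-regular triple in a 3-uniform hypergraph with |V₁| = |V₂| = 3m and |V₃| = 2m. Then there is a family of at most p pairwise vertex-disjoint loose paths, each edge used having one vertex in each of V₁, V₂, V₃, which covers all but at most βm vertices of V₁ ∪ V₂ ∪ V₃. -/

import Mathlib

open Finset

/-- The number of edges of `H` with exactly one vertex in each of `A₁`, `A₂`, `A₃`. -/
def eCross {V : Type} [DecidableEq V] (H : Finset (Finset V)) (A1 A2 A3 : Finset V) : ℕ :=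
  (H.filter (fun e => (e ∩ A1).card = 1 ∧ (e ∩ A2).card = 1 ∧ (e ∩ A3).card = 1)).card

/-- The density of `H` with respect to the triple `(A₁, A₂, A₃)`. -/
noncomputable def triDensity {V : Type} [DecidableEq V] (H : Finset (Finset V))
    (A1 A2 A3 : Finset V) : ℝ :=
  (eCross H A1 A2 A3 : ℝ) / ((A1.card : ℝ) * (A2.card : ℝ) * (A3.card : ℝ))

/-- The triple `(V₁, V₂, V₃)` is `(ε, d)`-regular in `H`. -/
def RegTriple {V : Type} [DecidableEq V] (H : Finset (Finset V)) (ε d : ℝ)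
    (V1 V2 V3 : Finset V) : Prop :=
  ∀ A1 A2 A3 : Finset V, A1 ⊆ V1 → A2 ⊆ V2 → A3 ⊆ V3 →
    ε * V1.card ≤ A1.card → ε * V2.card ≤ A2.card → ε * V3.card ≤ A3.card →
    |triDensity H A1 A2 A3 - d| ≤ ε

/-- `f` describes a loose path with `k ≥ 1` edges in the `3`-uniform hypergraph `H`:
the vertices `f 0, f 1, …, f (2k)` are distinct, and for every `i < k` the triple
`{f (2i), f (2i+1), f (2i+2)}` is an edge of `H`. -/
def IsLoosePath {V : Type} [DecidableEq V] (H : Finset (Finset V)) (k : ℕ) (f : ℕ → V) :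
    Prop :=
  1 ≤ k ∧
  (∀ i ≤ 2 * k, ∀ j ≤ 2 * k, f i = f j → i = j) ∧
  ∀ i < k, ({f (2 * i), f (2 * i + 1), f (2 * i + 2)} : Finset V) ∈ H

/-- The vertex set of the loose path described by `f` with `k` edges. -/
def pathVerts {V : Type} [DecidableEq V] (k : ℕ) (f : ℕ → V) : Finset V :=
  (Finset.range (2 * k + 1)).image f

/-!
A family of more than `2k|W|²` triples inside `W` contains, after repeatedly deleting vertices of
small degree, a subfamily of minimum degree more than `2k|W|`. As a pair of vertices lies in at most
`|W|` triples, a loose path in this subfamily with fewer than `k` edges can always be prolonged, and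
since every triple crosses the three parts, the parts visited by the path can be prescribed.
Prescribing a pattern that visits the parts in the ratio `3 : 3 : 2` and taking a maximal family of
disjoint paths of the same length, linear in `m`, the three parts are used up proportionally. By
maximality there are few edges between the uncovered vertices, so regularity makes the uncovered
portion of one part small, hence that of all three. As the paths have linear length, their number is
bounded.
-/

section EdgeCounting

variable {V : Type*} [DecidableEq V]

lemma exists_subset_forall_lt_card_filter_mem {t : ℕ} {W : Finset V} {E : Finset (Finset V)}
    (hE : E ⊆ W.powerset) (hcard : t * #W < #E) :
    ∃ E' ⊆ E, E'.Nonempty ∧ ∀ e ∈ E', ∀ v ∈ e, t < #{e' ∈ E' | v ∈ e'} := by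
  induction W using Finset.strongInduction generalizing E with
  | H W ih =>
    by_cases hdeg : ∀ e ∈ E, ∀ v ∈ e, t < #{e' ∈ E | v ∈ e'}
    · exact ⟨E, Subset.rfl, card_pos.mp (by lia), hdeg⟩
    push Not at hdeg
    obtain ⟨e, he, v, hve, hv⟩ := hdeg
    have hvW : v ∈ W := mem_powerset.mp (hE he) hve
    have hsub : {e' ∈ E | v ∉ e'} ⊆ (W.erase v).powerset := fun e' he' ↦ by
      rw [mem_filter] at he'
      exact mem_powerset.mpr (subset_erase.mpr ⟨mem_powerset.mp (hE he'.1), he'.2⟩)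
    have hlt : t * #(W.erase v) < #{e' ∈ E | v ∉ e'} := by
      have hsplit := card_filter_add_card_filter_not (s := E) (v ∈ ·)
      have hW : t * #W = t * #(W.erase v) + t := by rw [← card_erase_add_one hvW, mul_add_one]
      lia
    obtain ⟨E', hE'E, hE'⟩ := ih _ (erase_ssubset hvW) hsub hlt
    exact ⟨E', hE'E.trans (filter_subset _ _), hE'⟩

lemma card_filter_superset_le_choose {r : ℕ} {W : Finset V} {E : Finset (Finset V)}
    (hE : E ⊆ W.powersetCard r) (S : Finset V) :
    #{e ∈ E | S ⊆ e} ≤ (#W).choose (r - #S) := by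
  rw [← card_powersetCard]
  refine card_le_card_of_injOn (· \ S) (fun e he ↦ ?_) fun e he e' he' h ↦ ?_
  · obtain ⟨heE, hSe⟩ := mem_filter.mp he
    obtain ⟨heW, rfl⟩ := mem_powersetCard.mp (hE heE)
    exact mem_powersetCard.mpr ⟨sdiff_subset.trans heW, card_sdiff_of_subset hSe⟩
  · rw [← sdiff_union_of_subset (mem_filter.mp he).2, ← sdiff_union_of_subset (mem_filter.mp he').2]
    exact congrArg (· ∪ S) h

lemma exists_mem_disjoint_of_lt_card_filter_mem {W U : Finset V} {E : Finset (Finset V)} {v : V}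
    (hE : E ⊆ W.powersetCard 3) (hv : v ∉ U) (hdeg : #U * #W < #{e ∈ E | v ∈ e}) :
    ∃ e ∈ E, v ∈ e ∧ Disjoint e U := by
  by_contra! hmeet
  have hsub : {e ∈ E | v ∈ e} ⊆ U.biUnion fun u ↦ {e ∈ E | {v, u} ⊆ e} := fun e he ↦ by
    obtain ⟨heE, hve⟩ := mem_filter.mp he
    obtain ⟨u, hue, huU⟩ := not_disjoint_iff.mp (hmeet e heE hve)
    exact mem_biUnion.mpr ⟨u, huU, mem_filter.mpr ⟨heE, by simp [insert_subset_iff, hve, hue]⟩⟩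
  have hcodeg : ∀ u ∈ U, #{e ∈ E | {v, u} ⊆ e} ≤ #W := fun u hu ↦ by
    have hvu : v ≠ u := fun h ↦ hv (h ▸ hu)
    simpa [card_pair hvu] using card_filter_superset_le_choose hE {v, u}
  exact hdeg.not_ge ((card_le_card hsub).trans (card_biUnion_le_card_mul U _ _ hcodeg))

end EdgeCounting

section CrossingEdges

variable {V ι : Type*} [DecidableEq V] [Fintype ι]

/-- The edges of `H` with exactly one vertex in each of the parts `A j`; for three parts, `eCross`
counts them. -/
def crossingEdges (H : Finset (Finset V)) (A : ι → Finset V) : Finset (Finset V) :=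
  {e ∈ H | ∀ j, #(e ∩ A j) = 1}

lemma mem_crossingEdges {H : Finset (Finset V)} {A : ι → Finset V} {e : Finset V} :
    e ∈ crossingEdges H A ↔ e ∈ H ∧ ∀ j, #(e ∩ A j) = 1 :=
  mem_filter

lemma crossingEdges_subset (H : Finset (Finset V)) (A : ι → Finset V) : crossingEdges H A ⊆ H :=
  filter_subset _ _

lemma card_inter_biUnion_univ {A : ι → Finset V} (hA : Pairwise (Function.onFun Disjoint A))
    (e : Finset V) : #(e ∩ univ.biUnion A) = ∑ j, #(e ∩ A j) := by
  rw [inter_biUnion, card_biUnion fun i _ j _ hij ↦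
    (hA hij).mono inter_subset_right inter_subset_right]

lemma card_inter_eq_one_of_forall_nonempty {A : ι → Finset V}
    (hA : Pairwise (Function.onFun Disjoint A)) {e : Finset V} (he : #e = Fintype.card ι)
    (hmeet : ∀ j, (e ∩ A j).Nonempty) (j : ι) : #(e ∩ A j) = 1 := by
  have hle : ∑ j, #(e ∩ A j) ≤ ∑ _j : ι, 1 := by
    rw [← card_inter_biUnion_univ hA, sum_const, smul_eq_mul, mul_one, card_univ, ← he]
    exact card_le_card inter_subset_left
  have hge : ∀ j ∈ univ, 1 ≤ #(e ∩ A j) := fun j _ ↦ (hmeet j).card_pos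
  exact ((sum_eq_sum_iff_of_le hge).mp (le_antisymm (sum_le_sum hge) hle) j (mem_univ j)).symm

lemma crossingEdges_subset_powersetCard {H : Finset (Finset V)} {A : ι → Finset V}
    (hH : ∀ e ∈ H, #e = Fintype.card ι) (hA : Pairwise (Function.onFun Disjoint A)) :
    crossingEdges H A ⊆ (univ.biUnion A).powersetCard (Fintype.card ι) := fun e he ↦ by
  obtain ⟨heH, hcross⟩ := mem_crossingEdges.mp he
  refine mem_powersetCard.mpr ⟨inter_eq_left.mp ?_, hH e heH⟩
  refine eq_of_subset_of_card_le inter_subset_left ?_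
  simp [card_inter_biUnion_univ hA, hcross, hH e heH]

end CrossingEdges

section RainbowPaths

variable {V : Type*} [DecidableEq V]

/-- The sequence `c` of parts visited by a loose path is a rainbow pattern if each edge of the path
visits the three parts once each. -/
def IsRainbowPattern (c : ℕ → Fin 3) : Prop :=
  ∀ i, c (2 * i) ≠ c (2 * i + 1) ∧ c (2 * i) ≠ c (2 * i + 2) ∧ c (2 * i + 1) ≠ c (2 * i + 2)

/-- A loose path in `H` whose `i`-th vertex lies in the part `A (c i)`. Unlike in `IsLoosePath`,
the number `k` of edges may be zero, so that paths can be built edge by edge from a vertex. -/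
structure IsRainbowPath (H : Finset (Finset V)) (A : Fin 3 → Finset V) (c : ℕ → Fin 3) (k : ℕ)
    (f : ℕ → V) : Prop where
  injOn : Set.InjOn f (Set.Iic (2 * k))
  mem_part : ∀ i ≤ 2 * k, f i ∈ A (c i)
  edge_mem : ∀ i < k, {f (2 * i), f (2 * i + 1), f (2 * i + 2)} ∈ H

lemma IsRainbowPath.mono {H H' : Finset (Finset V)} {A A' : Fin 3 → Finset V} {c : ℕ → Fin 3}
    {k : ℕ} {f : ℕ → V} (hf : IsRainbowPath H A c k f) (hH : H ⊆ H') (hA : ∀ j, A j ⊆ A' j) :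
    IsRainbowPath H' A' c k f :=
  ⟨hf.injOn, fun i hi ↦ hA _ (hf.mem_part i hi), fun i hi ↦ hH (hf.edge_mem i hi)⟩

lemma eqOn_update_of_notMem {α β : Type*} [DecidableEq α] {s : Set α} {a : α} (ha : a ∉ s)
    (f : α → β) (b : β) : Set.EqOn (Function.update f a b) f s := fun _ hi ↦
  Function.update_of_ne (ne_of_mem_of_not_mem hi ha) b f

lemma injOn_update_insert {α β : Type*} [DecidableEq α] {f : α → β} {s : Set α} {a : α} {b : β}
    (hf : Set.InjOn f s) (ha : a ∉ s) (hb : b ∉ f '' s) :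
    Set.InjOn (Function.update f a b) (insert a s) := by
  have heq := eqOn_update_of_notMem ha f b
  rw [Set.injOn_insert ha, heq.image_eq, Function.update_self]
  exact ⟨hf.congr heq.symm, hb⟩

lemma IsRainbowPath.update_update {E : Finset (Finset V)} {A : Fin 3 → Finset V} {c : ℕ → Fin 3}
    {n : ℕ} {f : ℕ → V} {x y : V} (hf : IsRainbowPath E A c n f) (hxA : x ∈ A (c (2 * n + 1)))
    (hyA : y ∈ A (c (2 * n + 2))) (hx : x ∉ f '' Set.Iic (2 * n)) (hy : y ∉ f '' Set.Iic (2 * n))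
    (hxy : x ≠ y) (hedge : {f (2 * n), x, y} ∈ E) :
    IsRainbowPath E A c (n + 1)
      (Function.update (Function.update f (2 * n + 1) x) (2 * n + 2) y) := by
  have hIic :
      Set.Iic (2 * (n + 1)) = insert (2 * n + 2) (insert (2 * n + 1) (Set.Iic (2 * n))) := by
    ext i
    simp only [Set.mem_Iic, Set.mem_insert_iff]
    lia
  have hold : ∀ i ≤ 2 * n,
      Function.update (Function.update f (2 * n + 1) x) (2 * n + 2) y i = f i := fun i hi ↦ by
    rw [Function.update_of_ne (by lia), Function.update_of_ne (by lia)]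
  refine ⟨?_, fun i hi ↦ ?_, fun i hi ↦ ?_⟩
  · rw [hIic]
    refine injOn_update_insert (injOn_update_insert hf.injOn (by simp) hx) (by simp) ?_
    rw [Set.image_insert_eq, Function.update_self, (eqOn_update_of_notMem (by simp) f x).image_eq]
    exact fun h ↦ h.elim hxy.symm hy
  · obtain rfl | rfl | hi : i = 2 * n + 2 ∨ i = 2 * n + 1 ∨ i ≤ 2 * n := by lia
    · simpa using hyA
    · simpa using hxA
    · rw [hold i hi]
      exact hf.mem_part i hi
  · obtain rfl | hi : i = n ∨ i < n := by lia
    · simpa using hedge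
    · rw [hold _ (by lia), hold _ (by lia), hold _ (by lia)]
      exact hf.edge_mem i hi

lemma IsRainbowPath.exists_succ {E : Finset (Finset V)} {W : Finset V} {A : Fin 3 → Finset V}
    {c : ℕ → Fin 3} {n : ℕ} {f : ℕ → V} (hf : IsRainbowPath E A c n f) (hc : IsRainbowPattern c)
    (hA : Pairwise (Function.onFun Disjoint A)) (hE : E ⊆ W.powersetCard 3)
    (hmeet : ∀ e ∈ E, ∀ j, (e ∩ A j).Nonempty)
    (hdeg : 2 * n * #W < #{e ∈ E | f (2 * n) ∈ e}) :
    ∃ g, IsRainbowPath E A c (n + 1) g := by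
  have hcard : #((range (2 * n)).image f) ≤ 2 * n := card_image_le.trans (card_range _).le
  have hend : f (2 * n) ∉ (range (2 * n)).image f := fun h ↦ by
    obtain ⟨i, hi, hfi⟩ := mem_image.mp h
    rw [mem_range] at hi
    exact hi.ne (hf.injOn hi.le (Set.mem_Iic.mpr le_rfl) hfi)
  obtain ⟨e, he, hve, hdisj⟩ := exists_mem_disjoint_of_lt_card_filter_mem hE hend
    ((Nat.mul_le_mul_right _ hcard).trans_lt hdeg)
  have hnew : ∀ z ∈ e, f (2 * n) ≠ z → z ∉ f '' Set.Iic (2 * n) := by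
    rintro z hze hz ⟨i, hi, rfl⟩
    rw [Set.mem_Iic, le_iff_lt_or_eq] at hi
    rcases hi with hi | rfl
    · exact disjoint_left.mp hdisj hze (mem_image_of_mem f (mem_range.mpr hi))
    · exact hz rfl
  have hne : ∀ {i j x y}, x ∈ A i → y ∈ A j → i ≠ j → x ≠ y := fun hx hy hij ↦
    (hA hij).forall_ne_finset hx hy
  obtain ⟨x, hx⟩ := hmeet e he (c (2 * n + 1))
  obtain ⟨y, hy⟩ := hmeet e he (c (2 * n + 2))
  rw [mem_inter] at hx hy
  have hvA := hf.mem_part (2 * n) le_rfl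
  obtain ⟨hvx, hvy, hxy⟩ := hc n
  replace hvx := hne hvA hx.2 hvx
  replace hvy := hne hvA hy.2 hvy
  replace hxy := hne hx.2 hy.2 hxy
  have hedge : {f (2 * n), x, y} = e := by
    refine eq_of_subset_of_card_le (by simp [insert_subset_iff, hve, hx.1, hy.1]) ?_
    rw [(mem_powersetCard.mp (hE he)).2, card_eq_three.mpr ⟨_, _, _, hvx, hvy, hxy, rfl⟩]
  exact ⟨_, hf.update_update hx.2 hy.2 (hnew x hx.1 hvx) (hnew y hy.1 hvy) hxy (hedge ▸ he)⟩

lemma exists_isRainbowPath_of_forall_lt_card_filter_mem {E : Finset (Finset V)} {W : Finset V}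
    {A : Fin 3 → Finset V} {c : ℕ → Fin 3} {k : ℕ} (hne : E.Nonempty) (hc : IsRainbowPattern c)
    (hA : Pairwise (Function.onFun Disjoint A)) (hE : E ⊆ W.powersetCard 3)
    (hmeet : ∀ e ∈ E, ∀ j, (e ∩ A j).Nonempty)
    (hdeg : ∀ e ∈ E, ∀ v ∈ e, 2 * k * #W < #{e' ∈ E | v ∈ e'}) :
    ∃ f, IsRainbowPath E A c k f := by
  suffices h : ∀ n ≤ k, ∃ f, IsRainbowPath E A c n f ∧ ∃ e ∈ E, f (2 * n) ∈ e from
    (h k le_rfl).imp fun _ hf ↦ hf.1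
  intro n hn
  induction n with
  | zero =>
    obtain ⟨e, he⟩ := hne
    obtain ⟨x, hx⟩ := hmeet e he (c 0)
    rw [mem_inter] at hx
    refine ⟨fun _ ↦ x, ⟨?_, ?_, by simp⟩, e, he, hx.1⟩
    · simp [Set.InjOn]
    · simpa using hx.2
  | succ n ih =>
    obtain ⟨f, hf, e, he, hfe⟩ := ih (by lia)
    have hle : 2 * n * #W ≤ 2 * k * #W := by gcongr; lia
    obtain ⟨g, hg⟩ := hf.exists_succ hc hA hE hmeet (hle.trans_lt (hdeg e he _ hfe))
    exact ⟨g, hg, _, hg.edge_mem n (by lia), by simp [mul_add]⟩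

lemma exists_isRainbowPath_of_lt_card_crossingEdges {H : Finset (Finset V)} {A : Fin 3 → Finset V}
    {c : ℕ → Fin 3} {k : ℕ} (hc : IsRainbowPattern c) (hH : ∀ e ∈ H, #e = 3)
    (hA : Pairwise (Function.onFun Disjoint A))
    (hcard : 2 * k * #(univ.biUnion A) * #(univ.biUnion A) < #(crossingEdges H A)) :
    ∃ f, IsRainbowPath H A c k f := by
  have hsub : crossingEdges H A ⊆ (univ.biUnion A).powersetCard 3 :=
    crossingEdges_subset_powersetCard hH hA
  obtain ⟨E, hEH, hne, hdeg⟩ := exists_subset_forall_lt_card_filter_mem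
    (fun e he ↦ mem_powerset.mpr (mem_powersetCard.mp (hsub he)).1) hcard
  have hmeet : ∀ e ∈ E, ∀ j, (e ∩ A j).Nonempty := fun e he j ↦
    card_pos.mp (by simp [(mem_crossingEdges.mp (hEH he)).2 j])
  obtain ⟨f, hf⟩ := exists_isRainbowPath_of_forall_lt_card_filter_mem hne hc hA
    (hEH.trans hsub) hmeet hdeg
  exact ⟨f, hf.mono (hEH.trans (crossingEdges_subset H A)) fun _ ↦ Subset.rfl⟩

end RainbowPaths

section PathVertices

variable {V : Type} [DecidableEq V] {H : Finset (Finset V)} {A : Fin 3 → Finset V}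
  {c : ℕ → Fin 3} {k : ℕ} {f : ℕ → V}

lemma IsRainbowPath.isLoosePath (hf : IsRainbowPath H A c k f) (hk : 1 ≤ k) : IsLoosePath H k f :=
  ⟨hk, fun _ hi _ hj h ↦ hf.injOn hi hj h, hf.edge_mem⟩

lemma IsRainbowPath.card_edge_inter_eq_one (hf : IsRainbowPath H A c k f)
    (hc : IsRainbowPattern c) (hH : ∀ e ∈ H, #e = 3) (hA : Pairwise (Function.onFun Disjoint A))
    {i : ℕ} (hi : i < k) (j : Fin 3) :
    #({f (2 * i), f (2 * i + 1), f (2 * i + 2)} ∩ A j) = 1 := by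
  refine card_inter_eq_one_of_forall_nonempty hA (hH _ (hf.edge_mem i hi)) (fun j ↦ ?_) j
  have hcover : ∀ a b c : Fin 3, a ≠ b ∧ a ≠ c ∧ b ≠ c → ∀ j, j = a ∨ j = b ∨ j = c := by decide
  obtain rfl | rfl | rfl := hcover _ _ _ (hc i) j
  · exact ⟨_, mem_inter.mpr ⟨by simp, hf.mem_part _ (by lia)⟩⟩
  · exact ⟨_, mem_inter.mpr ⟨by simp, hf.mem_part _ (by lia)⟩⟩
  · exact ⟨_, mem_inter.mpr ⟨by simp, hf.mem_part _ (by lia)⟩⟩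

lemma IsRainbowPath.card_pathVerts (hf : IsRainbowPath H A c k f) :
    #(pathVerts k f) = 2 * k + 1 := by
  rw [pathVerts, card_image_of_injOn, card_range]
  exact hf.injOn.mono fun i hi ↦ by simpa [Nat.lt_succ_iff] using hi

lemma IsRainbowPath.pathVerts_subset (hf : IsRainbowPath H A c k f) :
    pathVerts k f ⊆ univ.biUnion A :=
  image_subset_iff.mpr fun i hi ↦
    mem_biUnion.mpr ⟨c i, mem_univ _, hf.mem_part i (Nat.lt_succ_iff.mp (mem_range.mp hi))⟩

lemma IsRainbowPath.card_pathVerts_inter_le (hf : IsRainbowPath H A c k f)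
    (hA : Pairwise (Function.onFun Disjoint A)) (j : Fin 3) :
    #(pathVerts k f ∩ A j) ≤ Nat.count (c · = j) (2 * k + 1) := by
  rw [Nat.count_eq_card_filter_range]
  refine (card_le_card fun v hv ↦ ?_).trans (card_image_le (f := f))
  obtain ⟨hvf, hvA⟩ := mem_inter.mp hv
  obtain ⟨i, hi, rfl⟩ := mem_image.mp hvf
  refine mem_image_of_mem f (mem_filter.mpr ⟨hi, ?_⟩)
  by_contra hij
  exact disjoint_left.mp (hA hij) (hf.mem_part i (Nat.lt_succ_iff.mp (mem_range.mp hi))) hvA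

end PathVertices

section TilingPattern

/-- The pattern of period `8` of the paths in the tiling. Four consecutive edges add `3`, `3` and
`2` vertices to the three parts; this forces the vertices shared by consecutive edges (at the even
positions) to lie in the last part every second time and in the first two alternately otherwise. -/
def tilingPattern (i : ℕ) : Fin 3 :=
  ![2, 1, 0, 1, 2, 0, 1, 0] (Fin.ofNat 8 i)

lemma tilingPattern_periodic : Function.Periodic tilingPattern 8 := fun i ↦ by
  simp [tilingPattern, Fin.ofNat]

lemma isRainbowPattern_tilingPattern : IsRainbowPattern tilingPattern := fun i ↦ by
  have hmod : ∀ b < 3, tilingPattern (2 * i + b) = tilingPattern (2 * (i % 4) + b) := fun b _ ↦ by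
    rw [← tilingPattern_periodic.map_mod_nat,
      ← tilingPattern_periodic.map_mod_nat (2 * (i % 4) + b)]
    congr 1
    lia
  have hperiod : ∀ a < 4, tilingPattern (2 * a) ≠ tilingPattern (2 * a + 1) ∧
      tilingPattern (2 * a) ≠ tilingPattern (2 * a + 2) ∧
      tilingPattern (2 * a + 1) ≠ tilingPattern (2 * a + 2) := by decide
  rw [← add_zero (2 * i), hmod 0 (by lia), add_zero (2 * i), hmod 1 (by lia), hmod 2 (by lia)]
  exact hperiod (i % 4) (Nat.mod_lt i (by lia))

lemma count_mul_of_periodic {p : ℕ → Prop} [DecidablePred p] {a : ℕ} (hp : Function.Periodic p a)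
    (n : ℕ) : Nat.count p (n * a) = n * Nat.count p a := by
  induction n with
  | zero => simp
  | succ n ih =>
    have hshift : (fun i ↦ p (i + a)) = p := funext hp
    simp only [add_one_mul, Nat.count_add', hshift, ih]

lemma count_tilingPattern_le (j : Fin 3) (s : ℕ) :
    Nat.count (tilingPattern · = j) (2 * (4 * s) + 1) ≤ ![3, 3, 2] j * s + 1 := by
  have hperiodic : Function.Periodic (tilingPattern · = j) 8 := fun i ↦ by
    simp only [tilingPattern_periodic i]
  have hcount : Nat.count (tilingPattern · = j) 8 = ![3, 3, 2] j :=
    (by decide : ∀ j, Nat.count (tilingPattern · = j) 8 = ![3, 3, 2] j) j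
  rw [Nat.count_succ, show 2 * (4 * s) = s * 8 by ring, count_mul_of_periodic hperiodic, hcount,
    mul_comm s]
  gcongr
  split_ifs <;> simp

end TilingPattern

section Tiling

lemma exists_maximal_pairwiseDisjoint {α : Type*} [DecidableEq α] (𝒮 : Finset (Finset α)) :
    ∃ M ⊆ 𝒮, (M : Set (Finset α)).PairwiseDisjoint id ∧
      ∀ S ∈ 𝒮, S.Nonempty → ¬Disjoint S (M.biUnion id) := by
  classical
  let 𝒟 : Finset (Finset (Finset α)) :=
    {M ∈ 𝒮.powerset | (M : Set (Finset α)).PairwiseDisjoint id}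
  obtain ⟨M, hM⟩ : ∃ M, Maximal (· ∈ 𝒟) M := exists_maximal ⟨∅, by simp [𝒟]⟩
  obtain ⟨hM𝒮, hdisj⟩ := mem_filter.mp hM.prop
  rw [mem_powerset] at hM𝒮
  refine ⟨M, hM𝒮, hdisj, fun S hS hne hSM ↦ hne.ne_empty ?_⟩
  have hnew : ∀ T ∈ M, Disjoint S T := fun T hT ↦ (disjoint_biUnion_right ..).mp hSM T hT
  have hinsert : insert S M ∈ 𝒟 := by
    simp only [𝒟, mem_filter, mem_powerset, insert_subset_iff, coe_insert]
    exact ⟨⟨hS, hM𝒮⟩, hdisj.insert fun T hT _ ↦ hnew T hT⟩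
  exact disjoint_self.mp (hnew S (hM.le_of_ge hinsert (subset_insert S M) (mem_insert_self S M)))

variable {V : Type} [DecidableEq V] {H : Finset (Finset V)} {P : Fin 3 → Finset V}

/-- `S` is a tile of scale `s`: the vertex set of a loose path with `4 * s` edges that follows
`tilingPattern`. -/
def IsTile (H : Finset (Finset V)) (P : Fin 3 → Finset V) (s : ℕ) (S : Finset V) : Prop :=
  ∃ f, IsRainbowPath H P tilingPattern (4 * s) f ∧ pathVerts (4 * s) f = S

lemma IsTile.card_eq {s : ℕ} {S : Finset V} (hS : IsTile H P s S) : #S = 8 * s + 1 := by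
  obtain ⟨f, hf, rfl⟩ := hS
  rw [hf.card_pathVerts]
  ring

lemma IsTile.subset {s : ℕ} {S : Finset V} (hS : IsTile H P s S) : S ⊆ univ.biUnion P := by
  obtain ⟨f, hf, rfl⟩ := hS
  exact hf.pathVerts_subset

lemma IsTile.card_inter_le {s : ℕ} {S : Finset V} (hS : IsTile H P s S)
    (hP : Pairwise (Function.onFun Disjoint P)) (j : Fin 3) :
    #(S ∩ P j) ≤ ![3, 3, 2] j * s + 1 := by
  obtain ⟨f, hf, rfl⟩ := hS
  exact (hf.card_pathVerts_inter_le hP j).trans (count_tilingPattern_le j s)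

lemma exists_isTile_of_lt_card_crossingEdges {A : Fin 3 → Finset V} {s m : ℕ}
    (hH : ∀ e ∈ H, #e = 3) (hP : Pairwise (Function.onFun Disjoint P)) (hAP : ∀ j, A j ⊆ P j)
    (hcard : #(univ.biUnion P) ≤ 8 * m) (hdense : 512 * s * m ^ 2 < #(crossingEdges H A)) :
    ∃ S ⊆ univ.biUnion A, IsTile H P s S := by
  have hA : #(univ.biUnion A) ≤ 8 * m :=
    (card_le_card (biUnion_mono fun j _ ↦ hAP j)).trans hcard
  obtain ⟨f, hf⟩ : ∃ f, IsRainbowPath H A tilingPattern (4 * s) f := by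
    refine exists_isRainbowPath_of_lt_card_crossingEdges isRainbowPattern_tilingPattern hH
      (fun i j hij ↦ (hP hij).mono (hAP i) (hAP j)) (hdense.trans_le' ?_)
    calc 2 * (4 * s) * #(univ.biUnion A) * #(univ.biUnion A)
        ≤ 2 * (4 * s) * (8 * m) * (8 * m) := by gcongr
      _ = 512 * s * m ^ 2 := by ring
  exact ⟨_, hf.pathVerts_subset, f, hf.mono Subset.rfl hAP, rfl⟩

lemma exists_maximal_isTile (H : Finset (Finset V)) (P : Fin 3 → Finset V) (s : ℕ) :
    ∃ M : Finset (Finset V), (∀ S ∈ M, IsTile H P s S) ∧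
      (M : Set (Finset V)).PairwiseDisjoint id ∧
      ∀ S, IsTile H P s S → ¬Disjoint S (M.biUnion id) := by
  classical
  obtain ⟨M, hM, hdisj, hmax⟩ :=
    exists_maximal_pairwiseDisjoint {S ∈ (univ.biUnion P).powerset | IsTile H P s S}
  refine ⟨M, fun S hS ↦ (mem_filter.mp (hM hS)).2, hdisj, fun S hS ↦ ?_⟩
  refine hmax S (mem_filter.mpr ⟨mem_powerset.mpr hS.subset, hS⟩) (card_pos.mp ?_)
  rw [hS.card_eq]
  lia

lemma exists_card_sdiff_lt_of_maximal {s m : ℕ} {δ : ℝ} {U : Finset V}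
    (hH : ∀ e ∈ H, #e = 3) (hP : Pairwise (Function.onFun Disjoint P))
    (hcard : #(univ.biUnion P) ≤ 8 * m) (hU : ∀ S, IsTile H P s S → ¬Disjoint S U)
    (hdense : ∀ A : Fin 3 → Finset V, (∀ j, A j ⊆ P j) → (∀ j, δ * #(P j) ≤ #(A j)) →
      512 * s * m ^ 2 < #(crossingEdges H A)) :
    ∃ j, (#(P j \ U) : ℝ) < δ * #(P j) := by
  by_contra! hlarge
  obtain ⟨S, hSU, hS⟩ := exists_isTile_of_lt_card_crossingEdges hH hP (fun _ ↦ sdiff_subset) hcard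
    (hdense _ (fun _ ↦ sdiff_subset) hlarge)
  refine hU S hS (Disjoint.mono_left hSU ?_)
  exact (disjoint_biUnion_left ..).mpr fun j _ ↦ sdiff_disjoint

lemma card_biUnion_of_isTile {s : ℕ} {M : Finset (Finset V)} (hM : ∀ S ∈ M, IsTile H P s S)
    (hdisj : (M : Set (Finset V)).PairwiseDisjoint id) :
    #(M.biUnion id) = #M * (8 * s + 1) := by
  rw [card_biUnion hdisj]
  exact sum_const_nat fun S hS ↦ (hM S hS).card_eq

lemma card_le_card_sdiff_biUnion_add_of_isTile {s : ℕ} {M : Finset (Finset V)}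
    (hP : Pairwise (Function.onFun Disjoint P)) (hM : ∀ S ∈ M, IsTile H P s S) (j : Fin 3) :
    #(P j) ≤ #(P j \ M.biUnion id) + #M * (![3, 3, 2] j * s + 1) := by
  rw [← card_sdiff_add_card_inter (P j) (M.biUnion id), inter_comm, biUnion_inter]
  gcongr
  exact card_biUnion_le_card_mul _ _ _ fun S hS ↦ (hM S hS).card_inter_le hP j

lemma exists_tiles_card_uncovered_le {s m : ℕ} {δ : ℝ}
    (hH : ∀ e ∈ H, #e = 3) (hP : Pairwise (Function.onFun Disjoint P))
    (hcard : ∀ j, #(P j) = ![3, 3, 2] j * m)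
    (hdense : ∀ A : Fin 3 → Finset V, (∀ j, A j ⊆ P j) → (∀ j, δ * #(P j) ≤ #(A j)) →
      512 * s * m ^ 2 < #(crossingEdges H A)) :
    ∃ M : Finset (Finset V), (∀ S ∈ M, IsTile H P s S) ∧
      (M : Set (Finset V)).PairwiseDisjoint id ∧ #M * s ≤ m ∧
      (#(univ.biUnion P \ M.biUnion id) : ℝ) ≤ 8 * δ * m + 8 * #M := by
  have hcardP : #(univ.biUnion P) = 8 * m := by
    rw [card_biUnion fun i _ j _ hij ↦ hP hij]
    simp only [hcard, ← sum_mul, Fin.sum_univ_three]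
    rfl
  obtain ⟨M, hM, hdisj, hmax⟩ := exists_maximal_isTile H P s
  have hcover : #(univ.biUnion P \ M.biUnion id) + #M * (8 * s + 1) = 8 * m := by
    rw [← card_biUnion_of_isTile hM hdisj, ← hcardP]
    exact card_sdiff_add_card_eq_card (biUnion_subset.mpr fun S hS ↦ (hM S hS).subset)
  refine ⟨M, hM, hdisj, by lia, ?_⟩
  obtain ⟨j, hj⟩ := exists_card_sdiff_lt_of_maximal hH hP hcardP.le hmax hdense
  have hpart := card_le_card_sdiff_biUnion_add_of_isTile hP hM j
  have hw : 1 ≤ ![3, 3, 2] j := (by decide : ∀ j : Fin 3, 1 ≤ ![3, 3, 2] j) j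
  rw [hcard j] at hj hpart
  generalize ![3, 3, 2] j = w at hj hpart hw
  have hused : (w : ℝ) * ((1 - δ) * m - #M * s) ≤ #M := by
    have hpart' : (w * m : ℝ) ≤ #(P j \ M.biUnion id) + #M * (w * s + 1) := by
      exact_mod_cast hpart
    push_cast at hj
    linarith
  have hshort : (1 - δ) * m - #M * s ≤ (#M : ℝ) :=
    ((le_div_iff₀' (by exact_mod_cast hw)).mpr hused).trans
      (div_le_self (by positivity) (by exact_mod_cast hw))
  have hcover' : (#(univ.biUnion P \ M.biUnion id) : ℝ) + #M * (8 * s + 1) = 8 * m := by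
    exact_mod_cast hcover
  linarith [Nat.cast_nonneg (α := ℝ) #M]

lemma IsTile.exists_isLoosePath {s : ℕ} {S : Finset V} (hS : IsTile H P s S) (hs : 1 ≤ s)
    (hH : ∀ e ∈ H, #e = 3) (hP : Pairwise (Function.onFun Disjoint P)) :
    ∃ f, IsLoosePath H (4 * s) f ∧ pathVerts (4 * s) f = S ∧
      ∀ i < 4 * s, ∀ j, #({f (2 * i), f (2 * i + 1), f (2 * i + 2)} ∩ P j) = 1 := by
  obtain ⟨f, hf, hfS⟩ := hS
  exact ⟨f, hf.isLoosePath (by lia), hfS, fun i hi ↦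
    hf.card_edge_inter_eq_one isRainbowPattern_tilingPattern hH hP hi⟩

/-- At most `p` vertex-disjoint loose paths of `H`, each of whose edges has one vertex in each of
the three parts, leave at most `b` vertices of the parts uncovered. -/
def HasLoosePathTiling (H : Finset (Finset V)) (V1 V2 V3 : Finset V) (p : ℕ) (b : ℝ) : Prop :=
  ∃ (q : ℕ) (ks : Fin q → ℕ) (fs : Fin q → ℕ → V),
    q ≤ p ∧
    (∀ i, IsLoosePath H (ks i) (fs i)) ∧
    (∀ i j, i ≠ j → Disjoint (pathVerts (ks i) (fs i)) (pathVerts (ks j) (fs j))) ∧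
    (∀ i, ∀ l < ks i,
      #({fs i (2 * l), fs i (2 * l + 1), fs i (2 * l + 2)} ∩ V1) = 1 ∧
      #({fs i (2 * l), fs i (2 * l + 1), fs i (2 * l + 2)} ∩ V2) = 1 ∧
      #({fs i (2 * l), fs i (2 * l + 1), fs i (2 * l + 2)} ∩ V3) = 1) ∧
    (#((V1 ∪ V2 ∪ V3) \ univ.biUnion fun i ↦ pathVerts (ks i) (fs i)) : ℝ) ≤ b

lemma hasLoosePathTiling_of_isTile {s p : ℕ} {b : ℝ} {M : Finset (Finset V)} (hs : 1 ≤ s)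
    (hH : ∀ e ∈ H, #e = 3) (hP : Pairwise (Function.onFun Disjoint P))
    (hM : ∀ S ∈ M, IsTile H P s S) (hdisj : (M : Set (Finset V)).PairwiseDisjoint id)
    (hp : #M ≤ p) (hb : (#(univ.biUnion P \ M.biUnion id) : ℝ) ≤ b) :
    HasLoosePathTiling H (P 0) (P 1) (P 2) p b := by
  let tile : Fin #M ≃ M := M.equivFin.symm
  choose f hf hfS hcross using fun i ↦ (hM _ (tile i).2).exists_isLoosePath hs hH hP
  have hcover : (univ.biUnion fun i ↦ pathVerts (4 * s) (f i)) = M.biUnion id := by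
    ext v
    simp [hfS, tile.exists_congr_left, Subtype.exists]
  have hparts : P 0 ∪ P 1 ∪ P 2 = univ.biUnion P := by
    ext v
    simp [Fin.exists_fin_succ]
  refine ⟨#M, fun _ ↦ 4 * s, f, hp, hf, fun i j hij ↦ ?_, fun i l hl ↦ ?_, ?_⟩
  · rw [hfS, hfS]
    exact hdisj (tile i).2 (tile j).2 (Subtype.coe_ne_coe.mpr (tile.injective.ne hij))
  · exact ⟨hcross i l hl 0, hcross i l hl 1, hcross i l hl 2⟩
  · rwa [hcover, hparts]

end Tiling

section Regularity

variable {V : Type} [DecidableEq V] {H : Finset (Finset V)} {ε d : ℝ}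

/-- The lower half of `(ε, d)`-regularity: large subtriples have density at least `d - ε`. -/
def LowerRegTriple (H : Finset (Finset V)) (ε d : ℝ) (V1 V2 V3 : Finset V) : Prop :=
  ∀ A1 A2 A3 : Finset V, A1 ⊆ V1 → A2 ⊆ V2 → A3 ⊆ V3 →
    ε * #V1 ≤ #A1 → ε * #V2 ≤ #A2 → ε * #V3 ≤ #A3 → d - ε ≤ triDensity H A1 A2 A3

lemma RegTriple.lowerRegTriple {V1 V2 V3 : Finset V} (h : RegTriple H ε d V1 V2 V3) :
    LowerRegTriple H ε d V1 V2 V3 := fun A1 A2 A3 h1 h2 h3 c1 c2 c3 ↦ by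
  linarith [(abs_le.mp (h A1 A2 A3 h1 h2 h3 c1 c2 c3)).1]

lemma eCross_eq_card_crossingEdges (H : Finset (Finset V)) (A : Fin 3 → Finset V) :
    eCross H (A 0) (A 1) (A 2) = #(crossingEdges H A) := by
  rw [eCross]
  congr 1
  ext e
  simp [mem_crossingEdges, Fin.forall_fin_succ]

lemma LowerRegTriple.le_card_crossingEdges {P A : Fin 3 → Finset V}
    (h : LowerRegTriple H ε d (P 0) (P 1) (P 2)) (hε : 0 ≤ ε) (hεd : ε ≤ d)
    (hAP : ∀ j, A j ⊆ P j) (hA : ∀ j, ε * #(P j) ≤ #(A j)) :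
    (d - ε) * ∏ j, (ε * #(P j)) ≤ #(crossingEdges H A) := by
  have hdensity : d - ε ≤ #(crossingEdges H A) / ∏ j, (#(A j) : ℝ) := by
    rw [Fin.prod_univ_three, ← eCross_eq_card_crossingEdges]
    exact h _ _ _ (hAP 0) (hAP 1) (hAP 2) (hA 0) (hA 1) (hA 2)
  calc (d - ε) * ∏ j, (ε * #(P j)) ≤ (d - ε) * ∏ j, (#(A j) : ℝ) := by
        have : 0 ≤ d - ε := sub_nonneg.mpr hεd
        gcongr with j
        exact hA j
    _ ≤ #(crossingEdges H A) := mul_le_of_le_div₀ (by positivity) (by positivity) hdensity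

lemma LowerRegTriple.lt_card_crossingEdges {P A : Fin 3 → Finset V} {s m : ℕ}
    (h : LowerRegTriple H ε d (P 0) (P 1) (P 2)) (hε : 0 < ε) (hεd : ε ≤ d / 2) (hm : 0 < m)
    (hP : ∀ j, #(P j) = ![3, 3, 2] j * m) (hs : s ≤ d * ε ^ 3 / 64 * m)
    (hAP : ∀ j, A j ⊆ P j) (hA : ∀ j, ε * #(P j) ≤ #(A j)) :
    512 * s * m ^ 2 < #(crossingEdges H A) := by
  have hd : 0 < d := by linarith
  have hsizes : ∏ j, (ε * #(P j)) = 18 * ε ^ 3 * m ^ 3 := by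
    simp [Fin.prod_univ_three, hP]
    ring
  suffices (512 * s * m ^ 2 : ℝ) < #(crossingEdges H A) by exact_mod_cast this
  calc (512 * s * m ^ 2 : ℝ) ≤ 512 * (d * ε ^ 3 / 64 * m) * m ^ 2 := by gcongr
    _ = 8 * (d * ε ^ 3 * m ^ 3) := by ring
    _ < 9 * (d * ε ^ 3 * m ^ 3) := by gcongr; norm_num
    _ = d / 2 * (18 * ε ^ 3 * m ^ 3) := by ring
    _ ≤ (d - ε) * ∏ j, (ε * #(P j)) := by rw [hsizes]; gcongr; linarith
    _ ≤ #(crossingEdges H A) := h.le_card_crossingEdges hε.le (by linarith) hAP hA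

lemma LowerRegTriple.hasLoosePathTiling {P : Fin 3 → Finset V} {m p s : ℕ} {b : ℝ}
    (h : LowerRegTriple H ε d (P 0) (P 1) (P 2)) (hε : 0 < ε) (hεd : ε ≤ d / 2) (hm : 0 < m)
    (hH : ∀ e ∈ H, #e = 3) (hdisj : Pairwise (Function.onFun Disjoint P))
    (hP : ∀ j, #(P j) = ![3, 3, 2] j * m) (hs : 1 ≤ s) (hsm : s ≤ d * ε ^ 3 / 64 * m)
    (hp : m ≤ p * s) (hb : 8 * ε * m + 8 * p ≤ b) :
    HasLoosePathTiling H (P 0) (P 1) (P 2) p b := by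
  obtain ⟨M, hM, hMdisj, hcard, huncovered⟩ := exists_tiles_card_uncovered_le hH hdisj hP
    fun A hAP hA ↦ h.lt_card_crossingEdges hε hεd hm hP hsm hAP hA
  have hMp : #M ≤ p := le_of_mul_le_mul_right (hcard.trans hp) hs
  refine hasLoosePathTiling_of_isTile hs hH hdisj hM hMdisj hMp (huncovered.trans (hb.trans' ?_))
  gcongr

end Regularity

lemma exists_length_scale {c β : ℝ} (hc : 0 < c) (hβ : 0 < β) :
    ∃ p m₀ : ℕ, ∀ m : ℕ, m₀ < m →
      ∃ s : ℕ, 1 ≤ s ∧ s ≤ c * m ∧ m ≤ p * s ∧ 8 * (p : ℝ) ≤ β * m := by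
  obtain ⟨p, hp⟩ := exists_nat_ge (2 / c)
  obtain ⟨m₀, hm₀⟩ := exists_nat_ge (max (1 / c) (8 * p / β))
  rw [div_le_iff₀ hc] at hp
  rw [max_le_iff, div_le_iff₀ hc, div_le_iff₀ hβ] at hm₀
  refine ⟨p, m₀, fun m hm ↦ ?_⟩
  have hmR : (m₀ : ℝ) ≤ m := by exact_mod_cast hm.le
  have hcm : 1 ≤ c * m := by nlinarith
  refine ⟨⌊c * m⌋₊, (Nat.one_le_floor_iff _).mpr hcm, Nat.floor_le (by positivity), ?_, ?_⟩
  · suffices (m : ℝ) ≤ p * ⌊c * m⌋₊ by exact_mod_cast this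
    calc (m : ℝ) = 2 * m / 2 := by ring
      _ ≤ p * c * m / 2 := by gcongr
      _ = p * (c * m / 2) := by ring
      _ ≤ p * ⌊c * m⌋₊ := by gcongr; exact (Nat.div_two_lt_floor hcm).le
  · calc 8 * (p : ℝ) ≤ m₀ * β := hm₀.2
      _ ≤ β * m := by rw [mul_comm]; gcongr

theorem path_tiling_of_regular_triple_general (d β : ℝ) (hd : 0 < d) (hβ : 0 < β) :
    ∃ ε : ℝ, 0 < ε ∧ ∃ p m₀ : ℕ, ∀ m : ℕ, m₀ < m →
      ∀ (V : Type) [DecidableEq V], ∀ H : Finset (Finset V), (∀ e ∈ H, #e = 3) →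
      ∀ V1 V2 V3 : Finset V, Disjoint V1 V2 → Disjoint V1 V3 → Disjoint V2 V3 →
        #V1 = 3 * m → #V2 = 3 * m → #V3 = 2 * m → LowerRegTriple H ε d V1 V2 V3 →
        HasLoosePathTiling H V1 V2 V3 p (β * m) := by
  set ε : ℝ := min (d / 2) (β / 16)
  have hε : 0 < ε := by positivity
  obtain ⟨p, m₀, hscale⟩ :=
    exists_length_scale (c := d * ε ^ 3 / 64) (by positivity) (half_pos hβ)
  refine ⟨ε, hε, p, m₀, fun m hm V _ H hH V1 V2 V3 h12 h13 h23 hV1 hV2 hV3 hreg ↦ ?_⟩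
  obtain ⟨s, hs, hsm, hms, hpm⟩ := hscale m hm
  have hdisj : Pairwise (Function.onFun Disjoint ![V1, V2, V3]) := by
    intro i j hij
    fin_cases i <;> fin_cases j <;> simp_all [Function.onFun, disjoint_comm]
  have hcard : ∀ j, #(![V1, V2, V3] j) = ![3, 3, 2] j * m := by
    simp [Fin.forall_fin_succ, hV1, hV2, hV3]
  have huncovered : 8 * ε * m + 8 * p ≤ β * m := by
    have hεm : ε * m ≤ β / 16 * m := by gcongr; exact min_le_right _ _
    linarith
  exact LowerRegTriple.hasLoosePathTiling (P := ![V1, V2, V3]) hreg hε (min_le_left _ _) (by lia)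
    hH hdisj hcard hs hsm hms huncovered

theorem path_tiling_of_regular_triple (d β : ℝ) (hd : 0 < d) (hβ : 0 < β) :
    ∃ ε : ℝ, 0 < ε ∧ ∃ p m₀ : ℕ, ∀ m : ℕ, m₀ < m →
      ∀ (V : Type) [Fintype V] [DecidableEq V], ∀ H : Finset (Finset V),
      (∀ e ∈ H, e.card = 3) →
      ∀ V1 V2 V3 : Finset V,
        Disjoint V1 V2 → Disjoint V1 V3 → Disjoint V2 V3 →
        V1.card = 3 * m → V2.card = 3 * m → V3.card = 2 * m →
        RegTriple H ε d V1 V2 V3 →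
        ∃ (q : ℕ) (ks : Fin q → ℕ) (fs : Fin q → ℕ → V),
          q ≤ p ∧
          (∀ i, IsLoosePath H (ks i) (fs i)) ∧
          (∀ i j, i ≠ j →
            Disjoint (pathVerts (ks i) (fs i)) (pathVerts (ks j) (fs j))) ∧
          (∀ i, ∀ l < ks i,
            (({fs i (2 * l), fs i (2 * l + 1), fs i (2 * l + 2)} : Finset V) ∩ V1).card = 1 ∧
            (({fs i (2 * l), fs i (2 * l + 1), fs i (2 * l + 2)} : Finset V) ∩ V2).card = 1 ∧
            (({fs i (2 * l), fs i (2 * l + 1), fs i (2 * l + 2)} : Finset V) ∩ V3).card = 1) ∧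
          ((((V1 ∪ V2 ∪ V3) \
              Finset.univ.biUnion fun i => pathVerts (ks i) (fs i)).card : ℝ)
            ≤ β * m) := by
  obtain ⟨ε, hε, p, m₀, h⟩ := path_tiling_of_regular_triple_general d β hd hβ
  exact ⟨ε, hε, p, m₀, fun m hm V _ _ H hH V1 V2 V3 h12 h13 h23 hV1 hV2 hV3 hreg ↦
    h m hm V H hH V1 V2 V3 h12 h13 h23 hV1 hV2 hV3 hreg.lowerRegTriple⟩
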